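/- Let k ≥ 2 be an integer and let E_k(x) = Σ_{n≥0} (number of cyclic staircase words in [k]^n) x^n be the generating function of cyclic staircase words over k. Then E_k(x) = 1 + kx(1+3x)/((1+x)(1-3x)) - 2(k+1)x·U_{k-1}((1-x)/(2x))/((1+x)(1-3x)·U_k((1-x)/(2x))), valid wherever the right-hand side is defined (x ∉ {0, -1, 1/3} and U_k((1-x)/(2x)) ≠ 0). -/

import Mathlib

/-- Evaluation of the Chebyshev polynomial of the second kind `U_n` at a real `x`. -/
noncomputable def chebU (n : ℤ) (x : ℝ) : ℝ := (Polynomial.Chebyshev.U ℝ n).eval x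

/-- A word `w ∈ [k]^n` (encoded as `Fin n → Fin k`) is a cyclic staircase word if
`|w_{i+1} - w_i| ≤ 1` for every `1 ≤ i ≤ n-1` and also `|w_n - w_1| ≤ 1`; equivalently,
every pair of cyclically adjacent letters differs by at most `1`. -/
def IsCyclicStaircase {k n : ℕ} (w : Fin n → Fin k) : Prop :=
  ∀ i : Fin n,
    |((w ⟨((i : ℕ) + 1) % n, Nat.mod_lt _ i.pos⟩ : ℕ) : ℤ) - ((w i : ℕ) : ℤ)| ≤ 1

theorem chebU_rec (n : ℤ) (y : ℝ) : chebU (n + 1) y = 2 * y * chebU n y - chebU (n - 1) y := by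
  have h := Polynomial.Chebyshev.U_add_two ℝ (n - 1)
  have h2 := congrArg (Polynomial.eval y) h
  simp only [Polynomial.eval_sub, Polynomial.eval_mul, Polynomial.eval_X,
    Polynomial.eval_ofNat] at h2
  rw [show n - 1 + 2 = n + 1 by ring, show n - 1 + 1 = n by ring] at h2
  exact h2

theorem chebU_neg_one (y : ℝ) : chebU (-1) y = 0 := by simp [chebU]

theorem chebU_zero (y : ℝ) : chebU 0 y = 1 := by simp [chebU]

theorem chebU_prod (m : ℕ) (n : ℤ) (y : ℝ) :
    chebU ((m : ℤ) + 1) y * chebU n y - chebU m y * chebU (n - 1) y = chebU (m + n + 1) y := by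
  induction m generalizing n with
  | zero =>
    have h1 := chebU_rec 0 y
    have h2 := chebU_rec n y
    simp only [zero_sub, chebU_neg_one, chebU_zero] at h1
    simp only [Nat.cast_zero, chebU_zero, h1]
    rw [zero_add, h2]; ring
  | succ m ih =>
    have h := ih (n + 1)
    have h1 := chebU_rec ((m : ℤ) + 1) y
    have h2 := chebU_rec n y
    rw [add_sub_cancel_right] at h1 h
    push_cast
    rw [show (m : ℤ) + 1 + n + 1 = m + (n + 1) + 1 by ring, ← h, h1, h2]
    ring

noncomputable def convU (k : ℕ) (y : ℝ) : ℝ :=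
  ∑ i ∈ Finset.range k, chebU (i : ℤ) y * chebU ((k : ℤ) - 1 - i) y

theorem convU_rec (k : ℕ) (y : ℝ) :
    convU (k + 2) y = 2 * y * convU (k + 1) y - convU k y + chebU ((k : ℤ) + 1) y := by
  unfold convU
  rw [Finset.sum_range_succ]
  have : ∀ i ∈ Finset.range (k + 1),
      chebU (i : ℤ) y * chebU (((k + 2 : ℕ) : ℤ) - 1 - i) y =
      2 * y * (chebU (i : ℤ) y * chebU (((k + 1 : ℕ) : ℤ) - 1 - i) y) -
        chebU (i : ℤ) y * chebU ((k : ℤ) - 1 - i) y := by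
    intro i _
    have h := chebU_rec ((k : ℤ) - i) y
    push_cast
    rw [show (k : ℤ) + 2 - 1 - i = k - i + 1 by ring, h, show (k : ℤ) + 1 - 1 - i = k - i by ring,
      show (k : ℤ) - i - 1 = k - 1 - i by ring]
    ring
  rw [Finset.sum_congr rfl this, Finset.sum_sub_distrib, ← Finset.mul_sum]
  rw [Finset.sum_range_succ (fun i : ℕ => chebU (i : ℤ) y * chebU ((k : ℤ) - 1 - i) y)]
  push_cast
  rw [show (k : ℤ) - 1 - k = -1 by ring, chebU_neg_one,
    show (k : ℤ) + 2 - 1 - (k + 1) = 0 by ring, chebU_zero]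
  ring

theorem convU_closed (k : ℕ) (y : ℝ) :
    2 * (y ^ 2 - 1) * convU k y =
      k * y * chebU k y - (k + 1) * chebU ((k : ℤ) - 1) y := by
  induction k using Nat.twoStepInduction with
  | zero => simp [convU, chebU_neg_one]
  | one =>
    have h1 := chebU_rec 0 y
    simp only [zero_sub, chebU_neg_one, chebU_zero, zero_add] at h1
    simp [convU, chebU_zero, h1]
    ring
  | more k ih1 ih2 =>
    have h1 := chebU_rec ((k : ℤ) + 1) y
    have h2 := chebU_rec (k : ℤ) y
    push_cast at ih2 ⊢
    rw [add_sub_cancel_right] at ih2 h1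
    rw [convU_rec, show (k : ℤ) + 2 - 1 = k + 1 by ring, show (k : ℤ) + 2 = k + 1 + 1 by ring, h1]
    have h3 : chebU ((k : ℤ) - 1) y = 2 * y * chebU k y - chebU (k + 1) y := by rw [h2]; ring
    rw [h3] at ih1
    linear_combination 2 * y * ih2 - ih1

/-- The transfer matrix. -/
def stairM (k : ℕ) : Matrix (Fin k) (Fin k) ℝ :=
  fun i j => if |((j : ℕ) : ℤ) - ((i : ℕ) : ℤ)| ≤ 1 then 1 else 0

theorem pow_apply_sum {ι : Type*} [Fintype ι] [DecidableEq ι] (A : Matrix ι ι ℝ) (n : ℕ)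
    (a b : ι) :
    (A ^ (n + 1)) a b = ∑ w : Fin (n + 1) → ι, (if w 0 = a then 1 else 0) *
      ((∏ i : Fin n, A (w i.castSucc) (w i.succ)) * A (w (Fin.last n)) b) := by
  induction n generalizing a with
  | zero =>
    rw [← (Equiv.funUnique (Fin 1) ι).symm.sum_comp]
    simp
  | succ n ih =>
    rw [pow_succ', Matrix.mul_apply, ← (Fin.consEquiv (fun _ => ι)).sum_comp, Fintype.sum_prod_type]
    simp only [ih, Fin.consEquiv_apply, Fin.cons_zero, ← Fin.succ_last, Fin.cons_succ,
      Fin.prod_univ_succ, Fin.castSucc_zero, ← Fin.succ_castSucc]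
    symm
    rw [Finset.sum_eq_single a]
    · symm
      simp only [Finset.mul_sum]
      rw [Finset.sum_comm]
      refine Finset.sum_congr rfl fun w _ => ?_
      rw [Finset.sum_eq_single (w 0)]
      · simp [mul_assoc]
      · intro c _ hc
        simp [hc.symm]
      · simp
    · intro c _ hc
      simp [hc]
    · simp

theorem trace_pow_sum {ι : Type*} [Fintype ι] [DecidableEq ι] (A : Matrix ι ι ℝ) (n : ℕ) :
    (A ^ (n + 1)).trace = ∑ w : Fin (n + 1) → ι,
      ((∏ i : Fin n, A (w i.castSucc) (w i.succ)) * A (w (Fin.last n)) (w 0)) := by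
  simp only [Matrix.trace, Matrix.diag, pow_apply_sum]
  rw [Finset.sum_comm]
  refine Finset.sum_congr rfl fun w _ => ?_
  rw [Finset.sum_eq_single (w 0)]
  · simp
  · intro c _ hc
    simp [hc.symm]
  · simp

theorem card_eq_trace (k n : ℕ) :
    (Nat.card {w : Fin (n + 1) → Fin k | IsCyclicStaircase w} : ℝ) =
      ((stairM k) ^ (n + 1)).trace := by
  classical
  rw [trace_pow_sum, show Nat.card {w : Fin (n + 1) → Fin k | IsCyclicStaircase w} =
    (Finset.univ.filter (fun w : Fin (n + 1) → Fin k => IsCyclicStaircase w)).card from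
      (Nat.card_eq_fintype_card (α := {w : Fin (n + 1) → Fin k // IsCyclicStaircase w})).trans
        (Fintype.card_subtype _), Finset.card_filter]
  push_cast
  refine Finset.sum_congr rfl fun w _ => ?_
  simp only [stairM, Finset.prod_ite_zero, Finset.prod_const_one, mul_ite, mul_one, mul_zero]
  rw [← ite_and]
  refine if_congr ?_ rfl rfl
  unfold IsCyclicStaircase
  rw [Fin.forall_fin_succ']
  rw [and_comm]
  have e1 : ∀ i : Fin n, (⟨((i.castSucc : ℕ) + 1) % (n + 1), Nat.mod_lt _ (by omega)⟩ : Fin (n + 1)) = i.succ := by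
    intro i
    ext
    simp
  have e2 : (⟨((Fin.last n : ℕ) + 1) % (n + 1), Nat.mod_lt _ (by omega)⟩ : Fin (n + 1)) = 0 := by
    ext
    simp
  simp only [e1, e2]
  simp

theorem sum_fin_ind (k : ℕ) (f : ℤ → ℝ) (m : ℤ) (hm : (m < 0 ∨ (k : ℤ) ≤ m) → f m = 0) :
    ∑ l : Fin k, (if ((l : ℕ) : ℤ) = m then f l else 0) = f m := by
  by_cases h : m < 0 ∨ (k : ℤ) ≤ m
  · rw [hm h]
    apply Finset.sum_eq_zero
    intro l _
    rw [if_neg]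
    have := l.2
    omega
  · rw [Finset.sum_eq_single (⟨m.toNat, by omega⟩ : Fin k)]
    · have : ((m.toNat : ℕ) : ℤ) = m := by omega
      simp [this]
    · intro l _ hl
      rw [if_neg]
      intro h'
      apply hl
      ext
      simp
      omega
    · simp

theorem stair_sum (k : ℕ) (f : ℤ → ℝ) (h0 : f (-1) = 0) (hk : f k = 0) (i : Fin k) :
    ∑ l : Fin k, stairM k i l * f l = f i + f ((i : ℤ) - 1) + f ((i : ℤ) + 1) := by
  have hi := i.2
  rw [← sum_fin_ind k f ((i : ℕ) : ℤ) (by intro h; omega),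
    ← sum_fin_ind k f (((i : ℕ) : ℤ) - 1) (by
      intro h
      rw [show ((i : ℕ) : ℤ) - 1 = -1 by omega, h0]),
    ← sum_fin_ind k f (((i : ℕ) : ℤ) + 1) (by
      intro h
      rw [show ((i : ℕ) : ℤ) + 1 = k by omega, hk]),
    ← Finset.sum_add_distrib, ← Finset.sum_add_distrib]
  refine Finset.sum_congr rfl fun l _ => ?_
  unfold stairM
  by_cases h : |((l : ℕ) : ℤ) - ((i : ℕ) : ℤ)| ≤ 1
  · rw [if_pos h]
    rw [abs_le] at h
    have : (l : ℤ) = (i : ℕ) ∨ (l : ℤ) = (i : ℕ) - 1 ∨ (l : ℤ) = (i : ℕ) + 1 := by omega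
    rcases this with h | h | h
    · rw [if_pos h, if_neg (by omega), if_neg (by omega)]; ring
    · rw [if_neg (by omega), if_pos h, if_neg (by omega)]; ring
    · rw [if_neg (by omega), if_neg (by omega), if_pos h]; ring
  · rw [if_neg h]
    rw [abs_le] at h
    rw [if_neg (by omega), if_neg (by omega), if_neg (by omega)]
    ring

/-- Unnormalised Green function. -/
noncomputable def green (k : ℕ) (y : ℝ) (j i : ℤ) : ℝ :=
  if i ≤ j then chebU i y * chebU ((k : ℤ) - 1 - j) y else chebU j y * chebU ((k : ℤ) - 1 - i) y

theorem green_rec (k : ℕ) (y : ℝ) (i j : Fin k) :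
    2 * y * green k y j i - green k y j ((i : ℤ) - 1) - green k y j ((i : ℤ) + 1) =
      if i = j then chebU k y else 0 := by
  unfold green
  have hi := i.2
  have hj := j.2
  rcases lt_trichotomy (i : ℕ) (j : ℕ) with h | h | h
  · rw [if_pos (by omega), if_pos (by omega), if_pos (by omega), if_neg (by intro h'; omega),
      chebU_rec]
    ring
  · have e : i = j := Fin.ext h
    subst e
    rw [if_pos (by omega), if_pos (by omega), if_neg (by omega), if_pos rfl]
    have h1 := chebU_prod i ((k : ℤ) - 1 - i) y
    rw [chebU_rec] at h1
    rw [show (i : ℤ) + (k - 1 - i) + 1 = k by ring,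
      show (k : ℤ) - 1 - i - 1 = k - 1 - (i + 1) by ring] at h1
    rw [← h1]
    ring
  · rw [if_neg (show ¬ (i = j) by intro h'; omega), if_neg (by omega),
      if_neg (show ¬ ((i : ℤ) + 1 ≤ j) by omega)]
    have h1 := chebU_rec ((k : ℤ) - 1 - i) y
    rw [show (k : ℤ) - 1 - i - 1 = k - 1 - (i + 1) by ring] at h1
    have h2 : (if ((i : ℕ) : ℤ) - 1 ≤ (j : ℕ) then
        chebU (((i : ℕ) : ℤ) - 1) y * chebU ((k : ℤ) - 1 - (j : ℕ)) y
        else chebU (j : ℕ) y * chebU ((k : ℤ) - 1 - (((i : ℕ) : ℤ) - 1)) y) =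
        chebU (j : ℕ) y * chebU ((k : ℤ) - 1 - i + 1) y := by
      split_ifs with h3
      · have : ((i : ℕ) : ℤ) = (j : ℕ) + 1 := by omega
        rw [this]
        congr 2 <;> ring
      · congr 2; ring
    rw [h2, h1]
    ring

theorem green_inv (k : ℕ) (x : ℝ) (hx : x ≠ 0) (hU : chebU k ((1 - x) / (2 * x)) ≠ 0) :
    (1 - x • stairM k) * Matrix.of (fun i j : Fin k => green k ((1 - x) / (2 * x)) j i /
      (x * chebU k ((1 - x) / (2 * x)))) = 1 := by
  ext i j
  have hj := j.2
  have hr := green_rec k ((1 - x) / (2 * x)) i j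
  have hs := stair_sum k (green k ((1 - x) / (2 * x)) j)
    (by unfold green; rw [if_pos (by omega), chebU_neg_one, zero_mul])
    (by
      unfold green
      rw [if_neg (by omega), show (k : ℤ) - 1 - k = -1 by ring, chebU_neg_one, mul_zero]) i
  rw [sub_mul, one_mul, Matrix.smul_mul, Matrix.sub_apply, Matrix.smul_apply, Matrix.mul_apply]
  simp only [Matrix.of_apply, ← mul_div_assoc]
  rw [← Finset.sum_div, hs, Matrix.one_apply]
  rw [smul_eq_mul]
  generalize green k ((1 - x) / (2 * x)) (j : ℕ) (i : ℕ) = g at *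
  generalize green k ((1 - x) / (2 * x)) (j : ℕ) (((i : ℕ) : ℤ) - 1) = g1 at *
  generalize green k ((1 - x) / (2 * x)) (j : ℕ) (((i : ℕ) : ℤ) + 1) = g2 at *
  generalize chebU k ((1 - x) / (2 * x)) = u at *
  have hr' : g - x * (g + g1 + g2) = x * (if i = j then u else 0) := by
    rw [← hr]
    field_simp
    ring
  rw [← mul_div_assoc, ← sub_div, hr', mul_div_mul_left _ _ hx]
  split_ifs
  · exact div_self hU
  · exact zero_div u

theorem trace_green (k : ℕ) (y c : ℝ) :
    (Matrix.of (fun i j : Fin k => green k y j i / c)).trace = convU k y / c := by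
  unfold convU
  rw [Finset.sum_range, Finset.sum_div]
  simp [Matrix.trace, green]

attribute [local instance] Matrix.linftyOpNormedRing Matrix.linftyOpNormedAlgebra

theorem stair_resolvent (k : ℕ) : ∃ ε > 0, ∀ x : ℝ, |x| < ε →
    ∃ S : Matrix (Fin k) (Fin k) ℝ, S * (1 - x • stairM k) = 1 ∧
      HasSum (fun n : ℕ => ((stairM k) ^ n).trace * x ^ n) S.trace := by
  refine ⟨1 / (‖stairM k‖ + 1), by positivity, fun x hx => ?_⟩
  have hn : ‖x • stairM k‖ < 1 := by
    rw [norm_smul, Real.norm_eq_abs]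
    rw [lt_div_iff₀ (by positivity)] at hx
    nlinarith [abs_nonneg x]
  refine ⟨∑' n : ℕ, (x • stairM k) ^ n, geom_series_mul_neg _ hn, ?_⟩
  have hS := (summable_geometric_of_norm_lt_one hn).hasSum
  have := hS.map (Matrix.traceAddMonoidHom (Fin k) ℝ) (by
    change Continuous (fun A : Matrix (Fin k) (Fin k) ℝ => A.trace)
    exact continuous_id.matrix_trace)
  convert this using 2 with n
  · change _ = ((x • stairM k) ^ n).trace
    rw [smul_pow, Matrix.trace_smul, smul_eq_mul, mul_comm]
  · rfl

/-- The generating function `E_k(x) = Σ_{n≥0} (#cyclic staircase words in [k]^n) xⁿ` equals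
`1 + kx(1+3x)/((1+x)(1-3x)) - 2(k+1)x·U_{k-1}((1-x)/(2x))/((1+x)(1-3x)·U_k((1-x)/(2x)))`,
wherever the right-hand side is defined (for sufficiently small `x`). -/
theorem gf_of_cyclic_staircase_words (k : ℕ) (hk : 2 ≤ k) :
    ∃ ε > 0, ∀ x : ℝ, |x| < ε →
      x ≠ 0 →
      x ≠ -1 →
      x ≠ 1 / 3 →
      chebU (k : ℤ) ((1 - x) / (2 * x)) ≠ 0 →
      ∑' n : ℕ, (Nat.card {w : Fin n → Fin k | IsCyclicStaircase w} : ℝ) * x ^ n =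
        1 + k * x * (1 + 3 * x) / ((1 + x) * (1 - 3 * x)) -
          2 * (k + 1) * x * chebU ((k : ℤ) - 1) ((1 - x) / (2 * x)) /
            ((1 + x) * (1 - 3 * x) * chebU (k : ℤ) ((1 - x) / (2 * x))) := by
  obtain ⟨ε, hε, H⟩ := stair_resolvent k
  refine ⟨min ε (1 / 3), by positivity, fun x hx hx0 hx1 hx3 hU => ?_⟩
  obtain ⟨S, hS, hsum⟩ := H x (lt_of_lt_of_le hx (min_le_left _ _))
  have hG := green_inv k x hx0 hU
  have hSG := left_inv_eq_right_inv hS hG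
  rw [hSG, trace_green] at hsum
  have hE : HasSum (fun n : ℕ =>
      (Nat.card {w : Fin n → Fin k | IsCyclicStaircase w} : ℝ) * x ^ n)
      (1 - k + convU k ((1 - x) / (2 * x)) / (x * chebU k ((1 - x) / (2 * x)))) := by
    rw [hasSum_nat_add_iff' 1 |>.symm] at hsum ⊢
    convert hsum using 1
    · funext n
      rw [card_eq_trace]
    · simp [IsCyclicStaircase]
      ring
  rw [hE.tsum_eq]
  have hc := convU_closed k ((1 - x) / (2 * x))
  have h1 : 1 + x ≠ 0 := fun h => hx1 (by linarith)
  have h3 : 1 - 3 * x ≠ 0 := fun h => hx3 (by linarith)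
  generalize convU k ((1 - x) / (2 * x)) = C at *
  generalize chebU k ((1 - x) / (2 * x)) = u at *
  generalize chebU ((k : ℤ) - 1) ((1 - x) / (2 * x)) = v at *
  have hC : C = x * (k * (1 - x) * u - (k + 1) * 2 * x * v) / ((1 + x) * (1 - 3 * x)) := by
    rw [eq_div_iff (mul_ne_zero h1 h3)]
    field_simp at hc
    linear_combination hc
  rw [hC]
  obtain ⟨d, hd⟩ : ∃ d, d = 1 - 3 * x := ⟨_, rfl⟩
  rw [← hd] at h3 ⊢
  field_simp
  rw [hd]
  ring
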